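/- arXiv:2402.15545 — 2 statements merged into one kernel-verified Lean document; each statement's English description precedes it below -/
import Mathlib

section
/- Let ℓ > 0 and let u be a classical solution of the rB equation on [0,T) that blows up at time T, in the sense that inf_{x∈ℝ} u_x(t,x) → −∞ as t ↑ T. Assume inf_x u_0'(x) < 0 < sup_x u_0'(x) and that sup_x |u_0'(x)| is finite. Then T ≥ 1 / sup_x |u_0'(x)|. In particular, the blow-up time is bounded below by a quantity independent of ℓ. -/
/-!
The kernel satisfies `P - ℓ² P_xx = ½ u_x²`, so differentiating the equation in `x` shows that the
slope `H(t) = u_x(t, X(t))` along a characteristic `X' = u(t, X)` obeys `H' = -½ H² - P`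
(`IsClassicalSolRB.hasDerivAt_ux_char`). The kernel is positive with mass one, hence
`0 ≤ P ≤ ½ F(t)²` with `F(t) = sup_x |u_x(t,x)|`. Therefore `H` is nonincreasing, and `-H` grows at
a rate of at most `½ F² + ½ F² = F²`, whatever `ℓ` is. Every point can be traced back to time `0`
along a characteristic (`IsClassicalSolRB.exists_char`), so `F` lies below the solution
`φ(t) = A / (1 - A t)` of `φ' = φ²`, `φ(0) = A` (`IsClassicalSolRB.abs_ux_le`). If `T < 1 / A`, then
`φ` is bounded on `[0,T]`, and so is `u_x`, contradicting the blow-up at `T`.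
-/


open MeasureTheory Set Filter

/-- The nonlocal term `P(t,·) = 𝔊_ℓ ∗ (½ u_x(t,·)²)` of the regularised Burgers equation,
where `𝔊_ℓ(x) = (2ℓ)⁻¹ exp(−|x|/ℓ)`. -/
noncomputable def rbP (ℓ : ℝ) (ux : ℝ → ℝ → ℝ) (t x : ℝ) : ℝ :=
  ∫ y : ℝ, (2 * ℓ)⁻¹ * Real.exp (-|x - y| / ℓ) * (ux t y ^ 2 / 2)

/-- A classical solution of the regularised Burgers equation
`u_t + u u_x + ℓ² P_x = 0` on `[0,T)`:  `u` is jointly `C²`, `u, u_x, u_{xx}` are bounded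
on `[0,t] × ℝ` for every `t < T`, `u_x(t,·)` is square-integrable for every `t < T`,
and the equation holds pointwise.  Here `ut, ux, uxx` denote the partial derivatives of `u`
and `Px` the spatial derivative of `P = rbP ℓ ux`. -/
structure IsClassicalSolRB (ℓ T : ℝ) (u ut ux uxx Px : ℝ → ℝ → ℝ) : Prop where
  smooth : ContDiffOn ℝ 2 (fun p : ℝ × ℝ => u p.1 p.2) (Set.Ico 0 T ×ˢ Set.univ)
  hut : ∀ t ∈ Set.Ico (0 : ℝ) T, ∀ x : ℝ, HasDerivAt (fun s => u s x) (ut t x) t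
  hux : ∀ t ∈ Set.Ico (0 : ℝ) T, ∀ x : ℝ, HasDerivAt (fun y => u t y) (ux t x) x
  huxx : ∀ t ∈ Set.Ico (0 : ℝ) T, ∀ x : ℝ, HasDerivAt (fun y => ux t y) (uxx t x) x
  bounded : ∀ t ∈ Set.Ico (0 : ℝ) T, ∃ C : ℝ, ∀ s ∈ Set.Icc (0 : ℝ) t, ∀ x : ℝ,
      |u s x| ≤ C ∧ |ux s x| ≤ C ∧ |uxx s x| ≤ C
  sqInt : ∀ t ∈ Set.Ico (0 : ℝ) T, MeasureTheory.Integrable (fun x : ℝ => ux t x ^ 2)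
  hPx : ∀ t ∈ Set.Ico (0 : ℝ) T, ∀ x : ℝ, HasDerivAt (fun y => rbP ℓ ux t y) (Px t x) x
  eqn : ∀ t ∈ Set.Ico (0 : ℝ) T, ∀ x : ℝ, ut t x + u t x * ux t x + ℓ ^ 2 * Px t x = 0

/-! ### Convolution with the kernel `(a/2) e^{-a|x|}` -/

section Kernel

variable {f : ℝ → ℝ} {a M : ℝ}

theorem integrableOn_left (ha : 0 < a) (hf : Continuous f) (h0 : ∀ y, 0 ≤ f y)
    (hM : ∀ y, f y ≤ M) (x : ℝ) : IntegrableOn (fun y => Real.exp (a * y) * f y) (Iic x) := by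
  refine Integrable.mono' ((integrableOn_exp_mul_Iic ha x).mul_const M) ?_ ?_
  · exact (by fun_prop : Continuous fun y => Real.exp (a * y) * f y).aestronglyMeasurable
  · refine Eventually.of_forall fun y => ?_
    rw [Real.norm_of_nonneg (mul_nonneg (Real.exp_pos _).le (h0 y))]
    exact mul_le_mul_of_nonneg_left (hM y) (Real.exp_pos _).le

theorem integrableOn_right (ha : 0 < a) (hf : Continuous f) (h0 : ∀ y, 0 ≤ f y)
    (hM : ∀ y, f y ≤ M) (x : ℝ) : IntegrableOn (fun y => Real.exp (-a * y) * f y) (Ioi x) := by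
  refine Integrable.mono' ((integrableOn_exp_mul_Ioi (neg_neg_of_pos ha) x).mul_const M) ?_ ?_
  · exact (by fun_prop : Continuous fun y => Real.exp (-a * y) * f y).aestronglyMeasurable
  · refine Eventually.of_forall fun y => ?_
    rw [Real.norm_of_nonneg (mul_nonneg (Real.exp_pos _).le (h0 y))]
    exact mul_le_mul_of_nonneg_left (hM y) (Real.exp_pos _).le

theorem hasDerivAt_left (ha : 0 < a) (hf : Continuous f) (h0 : ∀ y, 0 ≤ f y)
    (hM : ∀ y, f y ≤ M) (x : ℝ) :
    HasDerivAt (fun x => ∫ y in Iic x, Real.exp (a * y) * f y) (Real.exp (a * x) * f x) x := by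
  have hI := integrableOn_left ha hf h0 hM
  have hc : Continuous fun y => Real.exp (a * y) * f y := by fun_prop
  have h := (hc.integral_hasStrictDerivAt x x).hasDerivAt.const_add
    (∫ y in Iic x, Real.exp (a * y) * f y)
  refine h.congr_of_eventuallyEq (Eventually.of_forall fun z => ?_)
  simp only
  rw [← intervalIntegral.integral_Iic_sub_Iic (hI x) (hI z)]
  ring

theorem hasDerivAt_right (ha : 0 < a) (hf : Continuous f) (h0 : ∀ y, 0 ≤ f y)
    (hM : ∀ y, f y ≤ M) (x : ℝ) :
    HasDerivAt (fun x => ∫ y in Ioi x, Real.exp (-a * y) * f y)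
      (-(Real.exp (-a * x) * f x)) x := by
  have hI := integrableOn_right ha hf h0 hM
  have hc : Continuous fun y => Real.exp (-a * y) * f y := by fun_prop
  have h := (hc.integral_hasStrictDerivAt x x).hasDerivAt.const_sub
    (∫ y in Ioi x, Real.exp (-a * y) * f y)
  refine h.congr_of_eventuallyEq (Eventually.of_forall fun z => ?_)
  simp only
  have := intervalIntegral.integral_interval_add_Ioi' (hc.intervalIntegrable x z) (hI z)
  linarith

/-- Splitting at `y = x` separates the variables, so the convolution can be differentiated by the
fundamental theorem of calculus. -/
theorem kernel_split (ha : 0 < a) (hf : Continuous f) (h0 : ∀ y, 0 ≤ f y)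
    (hM : ∀ y, f y ≤ M) (x : ℝ) :
    ∫ y, a / 2 * Real.exp (-(a * |x - y|)) * f y =
      a / 2 * (Real.exp (-a * x) * (∫ y in Iic x, Real.exp (a * y) * f y) +
        Real.exp (a * x) * ∫ y in Ioi x, Real.exp (-a * y) * f y) := by
  have e1 : EqOn (fun y => a / 2 * Real.exp (-(a * |x - y|)) * f y)
      (fun y => a / 2 * Real.exp (-a * x) * (Real.exp (a * y) * f y)) (Iic x) := by
    intro y hy
    have : -(a * |x - y|) = -a * x + a * y := by
      rw [abs_of_nonneg (sub_nonneg.2 hy)]; ring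
    simp only [this, Real.exp_add]; ring
  have e2 : EqOn (fun y => a / 2 * Real.exp (-(a * |x - y|)) * f y)
      (fun y => a / 2 * Real.exp (a * x) * (Real.exp (-a * y) * f y)) (Ioi x) := by
    intro y hy
    have : -(a * |x - y|) = a * x + -a * y := by
      rw [abs_of_nonpos (sub_nonpos.2 (le_of_lt hy))]; ring
    simp only [this, Real.exp_add]; ring
  have i1 := ((integrableOn_left ha hf h0 hM x).const_mul (a / 2 * Real.exp (-a * x)))
  have i2 := ((integrableOn_right ha hf h0 hM x).const_mul (a / 2 * Real.exp (a * x)))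
  rw [← intervalIntegral.integral_Iic_add_Ioi
      (IntegrableOn.congr_fun i1 e1.symm measurableSet_Iic)
      (IntegrableOn.congr_fun i2 e2.symm measurableSet_Ioi),
    setIntegral_congr_fun measurableSet_Iic e1, setIntegral_congr_fun measurableSet_Ioi e2,
    integral_const_mul, integral_const_mul]
  ring

/-- The kernel has mass one, so the convolution is at most the supremum of `f`. -/
theorem kernel_le (ha : 0 < a) (hf : Continuous f) (h0 : ∀ y, 0 ≤ f y)
    (hM : ∀ y, f y ≤ M) (x : ℝ) :
    ∫ y, a / 2 * Real.exp (-(a * |x - y|)) * f y ≤ M := by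
  rw [kernel_split ha hf h0 hM]
  have h1 : (∫ y in Iic x, Real.exp (a * y) * f y) ≤ Real.exp (a * x) / a * M := by
    rw [← integral_exp_mul_Iic ha x, ← integral_mul_const]
    exact integral_mono (integrableOn_left ha hf h0 hM x)
      ((integrableOn_exp_mul_Iic ha x).mul_const M)
      fun y => mul_le_mul_of_nonneg_left (hM y) (Real.exp_pos _).le
  have h2 : (∫ y in Ioi x, Real.exp (-a * y) * f y) ≤ Real.exp (-a * x) / a * M := by
    have : Real.exp (-a * x) / a = -Real.exp (-a * x) / -a := by rw [neg_div_neg_eq]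
    rw [this, ← integral_exp_mul_Ioi (neg_neg_of_pos ha) x, ← integral_mul_const]
    exact integral_mono (integrableOn_right ha hf h0 hM x)
      ((integrableOn_exp_mul_Ioi (neg_neg_of_pos ha) x).mul_const M)
      fun y => mul_le_mul_of_nonneg_left (hM y) (Real.exp_pos _).le
  have he : Real.exp (-a * x) * Real.exp (a * x) = 1 := by
    rw [← Real.exp_add]; simp
  calc _ ≤ a / 2 * (Real.exp (-a * x) * (Real.exp (a * x) / a * M) +
        Real.exp (a * x) * (Real.exp (-a * x) / a * M)) := by gcongr
    _ = (Real.exp (-a * x) * Real.exp (a * x)) * M := by field_simp; ring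
    _ = M := by rw [he, one_mul]

/-- The Helmholtz identity `g'' = a² (g - f)` for `g = (a/2) e^{-a|·|} ∗ f`, phrased for any
function `g'` that is known to be the derivative of `g` everywhere. -/
theorem kernel_helmholtz (ha : 0 < a) (hf : Continuous f) (h0 : ∀ y, 0 ≤ f y)
    (hM : ∀ y, f y ≤ M) {g' : ℝ → ℝ}
    (hg : ∀ x, HasDerivAt (fun x => ∫ y, a / 2 * Real.exp (-(a * |x - y|)) * f y) (g' x) x)
    (x : ℝ) :
    HasDerivAt g' (a ^ 2 * ((∫ y, a / 2 * Real.exp (-(a * |x - y|)) * f y) - f x)) x := by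
  have he : ∀ x, Real.exp (-a * x) * Real.exp (a * x) = 1 := fun x => by
    rw [← Real.exp_add]; simp
  have d1 := hasDerivAt_left ha hf h0 hM
  have d2 := hasDerivAt_right ha hf h0 hM
  have ex : ∀ b x : ℝ, HasDerivAt (fun x => Real.exp (b * x)) (Real.exp (b * x) * b) x :=
    fun b x => by simpa using ((hasDerivAt_id x).const_mul b).exp
  have hg' : g' = fun x => a / 2 * (-a * (Real.exp (-a * x) * ∫ y in Iic x, Real.exp (a * y) * f y)
      + a * (Real.exp (a * x) * ∫ y in Ioi x, Real.exp (-a * y) * f y)) := by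
    funext z
    refine (hg z).unique ?_
    simp only [kernel_split ha hf h0 hM]
    refine ((((ex (-a) z).mul (d1 z)).add ((ex a z).mul (d2 z))).const_mul (a / 2)).congr_deriv ?_
    ring
  rw [hg', kernel_split ha hf h0 hM]
  refine (((((ex (-a) x).mul (d1 x)).const_mul (-a)).add
    (((ex a x).mul (d2 x)).const_mul a)).const_mul (a / 2)).congr_deriv ?_
  linear_combination (- a ^ 2 * f x) * (he x)

end Kernel

theorem rbP_eq {ℓ : ℝ} (ux : ℝ → ℝ → ℝ) (t x : ℝ) :
    rbP ℓ ux t x = ∫ y, ℓ⁻¹ / 2 * Real.exp (-(ℓ⁻¹ * |x - y|)) * (ux t y ^ 2 / 2) := by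
  unfold rbP
  congr 1
  funext y
  have h1 : (2 * ℓ)⁻¹ = ℓ⁻¹ / 2 := by rw [mul_inv]; ring
  have h2 : -|x - y| / ℓ = -(ℓ⁻¹ * |x - y|) := by rw [div_eq_mul_inv]; ring
  rw [h1, h2]

/-! ### The slope along characteristics -/

namespace IsClassicalSolRB

variable {ℓ T : ℝ} {u ut ux uxx Px : ℝ → ℝ → ℝ}

theorem continuous_ux (h : IsClassicalSolRB ℓ T u ut ux uxx Px) {t : ℝ} (ht : t ∈ Ico 0 T) :
    Continuous (ux t) :=
  continuous_iff_continuousAt.2 fun x => (h.huxx t ht x).continuousAt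

theorem rbP_le (hℓ : 0 < ℓ) (h : IsClassicalSolRB ℓ T u ut ux uxx Px) {t : ℝ}
    (ht : t ∈ Ico 0 T) {G : ℝ} (hG : ∀ x, |ux t x| ≤ G) (x : ℝ) :
    rbP ℓ ux t x ≤ G ^ 2 / 2 := by
  rw [rbP_eq]
  refine kernel_le (f := fun y => ux t y ^ 2 / 2) (inv_pos.2 hℓ)
    (((h.continuous_ux ht).pow 2).div_const 2) (fun y => by positivity) (fun y => ?_) x
  have := sq_le_sq' (abs_le.1 (hG y)).1 (abs_le.1 (hG y)).2
  linarith

theorem rbP_nonneg (hℓ : 0 < ℓ) (t x : ℝ) : 0 ≤ rbP ℓ ux t x :=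
  integral_nonneg fun y => by positivity

/-- `ℓ² P_xx = P - ½ u_x²`. -/
theorem hasDerivAt_Px (hℓ : 0 < ℓ) (h : IsClassicalSolRB ℓ T u ut ux uxx Px) {t : ℝ}
    (ht : t ∈ Ico 0 T) (x : ℝ) :
    HasDerivAt (Px t) ((ℓ⁻¹) ^ 2 * (rbP ℓ ux t x - ux t x ^ 2 / 2)) x := by
  obtain ⟨C, hC⟩ := h.bounded t ht
  have hP := h.hPx t ht
  simp only [rbP_eq] at hP ⊢
  refine kernel_helmholtz (f := fun y => ux t y ^ 2 / 2) (M := C ^ 2 / 2) (inv_pos.2 hℓ)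
    (((h.continuous_ux ht).pow 2).div_const 2) (fun y => by positivity) (fun y => ?_) hP x
  have hy := (hC t ⟨ht.1, le_rfl⟩ y).2.1
  have := sq_le_sq' (abs_le.1 hy).1 (abs_le.1 hy).2
  linarith

theorem uniqueDiffOn_strip : UniqueDiffOn ℝ (Ico (0 : ℝ) T ×ˢ (univ : Set ℝ)) :=
  (uniqueDiffOn_Ico 0 T).prod uniqueDiffOn_univ

theorem ux_eq_fderivWithin (h : IsClassicalSolRB ℓ T u ut ux uxx Px) {p : ℝ × ℝ}
    (hp : p ∈ Ico (0 : ℝ) T ×ˢ (univ : Set ℝ)) :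
    ux p.1 p.2 = fderivWithin ℝ (fun p : ℝ × ℝ => u p.1 p.2) (Ico 0 T ×ˢ univ) p (0, 1) := by
  have hd := ((h.smooth.differentiableOn (by norm_num)) p hp).hasFDerivWithinAt
  have hl : HasDerivAt (fun y : ℝ => ((p.1, y) : ℝ × ℝ)) (0, 1) p.2 :=
    (hasDerivAt_const p.2 p.1).prodMk (hasDerivAt_id p.2)
  have := hd.comp_hasDerivAt_of_eq p.2 hl
    (Eventually.of_forall fun y => ⟨hp.1, mem_univ _⟩) rfl
  exact (h.hux p.1 hp.1 p.2).unique this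

/-- Continuity of `u_x` up to the initial line `t = 0`. -/
theorem continuousOn_ux (h : IsClassicalSolRB ℓ T u ut ux uxx Px) :
    ContinuousOn (fun p : ℝ × ℝ => ux p.1 p.2) (Ico 0 T ×ˢ univ) := by
  have h1 := h.smooth.continuousOn_fderivWithin uniqueDiffOn_strip (by norm_num)
  exact (h1.clm_apply continuousOn_const).congr fun p hp => h.ux_eq_fderivWithin hp

/-- Differentiating the equation in `x`: along a curve with `X' = u(t, X)`, the slope
`u_x(t, X(t))` obeys the Riccati-type equation `H' = -½ H² - P`. -/
theorem hasDerivAt_ux_char (hℓ : 0 < ℓ) (h : IsClassicalSolRB ℓ T u ut ux uxx Px) {t : ℝ}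
    (ht : t ∈ Ioo 0 T) {X : ℝ → ℝ} (hX : HasDerivAt X (u t (X t)) t) :
    HasDerivAt (fun s => ux s (X s)) (-(ux t (X t) ^ 2 / 2) - rbP ℓ ux t (X t)) t := by
  set U : ℝ × ℝ → ℝ := fun p => u p.1 p.2 with hU
  set x := X t with hx
  have ht' : t ∈ Ico 0 T := ⟨ht.1.le, ht.2⟩
  have hnhds : ∀ᶠ p : ℝ × ℝ in nhds (t, x), p.1 ∈ Ioo 0 T :=
    continuousAt_fst.eventually (isOpen_Ioo.mem_nhds ht)
  have hcd : ∀ p : ℝ × ℝ, p.1 ∈ Ioo 0 T → ContDiffAt ℝ 2 U p := fun p hp =>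
    h.smooth.contDiffAt (prod_mem_nhds (Ico_mem_nhds hp.1 hp.2) univ_mem)
  have hd : ∀ p : ℝ × ℝ, p.1 ∈ Ioo 0 T → HasFDerivAt U (fderiv ℝ U p) p := fun p hp =>
    ((hcd p hp).differentiableAt (by norm_num)).hasFDerivAt
  have hUx : ∀ p : ℝ × ℝ, p.1 ∈ Ioo 0 T → ux p.1 p.2 = fderiv ℝ U p (0, 1) := fun p hp =>
    (h.hux p.1 ⟨hp.1.le, hp.2⟩ p.2).unique ((hd p hp).comp_hasDerivAt_of_eq p.2
      ((hasDerivAt_const p.2 p.1).prodMk (hasDerivAt_id p.2)) rfl)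
  have hUt : ∀ p : ℝ × ℝ, p.1 ∈ Ioo 0 T → ut p.1 p.2 = fderiv ℝ U p (1, 0) := fun p hp =>
    (h.hut p.1 ⟨hp.1.le, hp.2⟩ p.2).unique ((hd p hp).comp_hasDerivAt_of_eq p.1
      ((hasDerivAt_id p.1).prodMk (hasDerivAt_const p.1 p.2)) rfl)
  obtain ⟨D, hD⟩ : ∃ D, HasFDerivAt (fderiv ℝ U) D (t, x) :=
    ⟨_, (((hcd (t, x) ht).fderiv_right (m := 1) (by norm_num)).differentiableAt
      (by norm_num)).hasFDerivAt⟩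
  have hsymm : ∀ v w, D v w = D w v :=
    second_derivative_symmetric_of_eventually (hnhds.mono fun p hp => hd p hp) hD
  have hline : HasDerivAt (fun y : ℝ => ((t, y) : ℝ × ℝ)) (0, 1) x :=
    (hasDerivAt_const x t).prodMk (hasDerivAt_id x)
  have hxx : uxx t x = D (0, 1) (0, 1) := by
    have h1 := (hD.comp_hasDerivAt_of_eq x hline rfl).clm_apply (hasDerivAt_const x ((0, 1) : ℝ × ℝ))
    refine (h.huxx t ht' x).unique ((h1.congr_of_eventuallyEq
      (Eventually.of_forall fun y => hUx (t, y) ht)).congr_deriv ?_)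
    simp
  have htx : D (0, 1) (1, 0) =
      -(ux t x * ux t x + u t x * uxx t x) - (rbP ℓ ux t x - ux t x ^ 2 / 2) := by
    have h1 := (hD.comp_hasDerivAt_of_eq x hline rfl).clm_apply (hasDerivAt_const x ((1, 0) : ℝ × ℝ))
    have h2 := (((h.hux t ht' x).mul (h.huxx t ht' x)).neg).sub
      ((h.hasDerivAt_Px hℓ ht' x).const_mul (ℓ ^ 2))
    have h3 := h1.unique (h2.congr_of_eventuallyEq (Eventually.of_forall fun y => ?_))
    · simp only [map_zero, add_zero] at h3
      rw [h3]
      field_simp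
    · have e1 := hUt (t, y) ht
      have e2 := h.eqn t ht' y
      simp only [Function.comp_apply, Pi.sub_apply, Pi.neg_apply, Pi.mul_apply] at e1 ⊢
      rw [← e1]; linarith
  have hcurve : HasDerivAt (fun s => ((s, X s) : ℝ × ℝ)) (1, u t x) t :=
    (hasDerivAt_id t).prodMk hX
  have h1 := (hD.comp_hasDerivAt_of_eq t hcurve rfl).clm_apply
    (hasDerivAt_const t ((0, 1) : ℝ × ℝ))
  refine (h1.congr_of_eventuallyEq ?_).congr_deriv ?_
  · filter_upwards [isOpen_Ioo.mem_nhds ht] with s hs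
    exact hUx (s, X s) hs
  · have hv : ((1, u t x) : ℝ × ℝ) = (1, 0) + u t x • (0, 1) := by simp
    simp only [map_zero, add_zero]
    rw [hv, map_add, map_smul, add_apply, smul_apply,
      hsymm (1, 0) (0, 1), htx, ← hxx, smul_eq_mul]
    ring

/-- Every point of the strip lies on a characteristic curve that reaches back to time `0`. -/
theorem exists_char (h : IsClassicalSolRB ℓ T u ut ux uxx Px) {t : ℝ} (ht : t ∈ Ico 0 T)
    (x : ℝ) : ∃ X : ℝ → ℝ, X t = x ∧
      ∀ s ∈ Icc 0 t, HasDerivWithinAt X (u s (X s)) (Icc 0 t) s := by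
  obtain ⟨C, hC⟩ := h.bounded t ht
  have hsub : ∀ s ∈ Icc 0 t, s ∈ Ico 0 T := fun s hs => ⟨hs.1, hs.2.trans_lt ht.2⟩
  have hC0 : 0 ≤ C := (abs_nonneg _).trans (hC t ⟨ht.1, le_rfl⟩ 0).1
  have hPL : IsPicardLindelof u (tmin := 0) (tmax := t) ⟨t, ht.1, le_rfl⟩ x
      (C.toNNReal * t.toNNReal) 0 C.toNNReal C.toNNReal := by
    refine ⟨fun s hs => ?_, fun y _ s hs => ?_, fun s hs y _ => ?_, ?_⟩
    · refine (lipschitzWith_of_nnnorm_deriv_le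
        (fun y => (h.hux s (hsub s hs) y).differentiableAt) fun y => ?_).lipschitzOnWith
      rw [(h.hux s (hsub s hs) y).deriv, ← NNReal.coe_le_coe, Real.coe_toNNReal _ hC0]
      exact (hC s hs y).2.1
    · exact (h.hut s (hsub s hs) y).continuousAt.continuousWithinAt
    · rw [Real.coe_toNNReal _ hC0]
      exact (hC s hs y).1
    · simp [Real.coe_toNNReal _ hC0, Real.coe_toNNReal _ ht.1, ht.1]
  exact hPL.exists_eq_forall_mem_Icc_hasDerivWithinAt₀

theorem continuousOn_ux_char (h : IsClassicalSolRB ℓ T u ut ux uxx Px) {t : ℝ}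
    (ht : t ∈ Ico 0 T) {X : ℝ → ℝ} (hX : ContinuousOn X (Icc 0 t)) :
    ContinuousOn (fun s => ux s (X s)) (Icc 0 t) :=
  h.continuousOn_ux.comp (continuousOn_id.prodMk hX)
    fun _ hs => ⟨⟨hs.1, hs.2.trans_lt ht.2⟩, mem_univ _⟩

/-! ### Comparison with the Riccati equation -/

/-- The comparison principle: if `φ' = φ²` on `[0,τ]`, `φ(0) ≤ φ ≤ Φ` there, and
`|u_x(0,·)| ≤ φ(0)`, then `|u_x| ≤ φ` on `[0,τ] × ℝ`. The excess of `|u_x|` over `φ`, measured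
with the weight `e^{-2Bt}`, is bounded by the a priori bound `C` of `u_x`, and is halved by each
pass through the equation along characteristics. Arguing with bounds in this way requires no
continuity or measurability of `t ↦ sup_x |u_x(t,x)|`. -/
theorem abs_ux_le (hℓ : 0 < ℓ) (h : IsClassicalSolRB ℓ T u ut ux uxx Px) {φ : ℝ → ℝ} {τ Φ : ℝ}
    (hτ : τ ∈ Ico 0 T) (hφ : ∀ t ∈ Icc 0 τ, HasDerivAt φ (φ t ^ 2) t)
    (h0 : ∀ x, |ux 0 x| ≤ φ 0) (hmono : ∀ t ∈ Icc 0 τ, φ 0 ≤ φ t)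
    (hΦ : ∀ t ∈ Icc 0 τ, φ t ≤ Φ)
    {t : ℝ} (ht : t ∈ Icc 0 τ) (x : ℝ) : |ux t x| ≤ φ t := by
  obtain ⟨C, hC⟩ := h.bounded τ hτ
  have hsub : ∀ s ∈ Icc 0 τ, s ∈ Ico 0 T := fun s hs => ⟨hs.1, hs.2.trans_lt hτ.2⟩
  have hφ0 : 0 ≤ φ 0 := (abs_nonneg _).trans (h0 0)
  have hC0 : 0 ≤ C := (abs_nonneg _).trans (hC τ ⟨hτ.1, le_rfl⟩ 0).1
  have hΦ0 : 0 ≤ Φ := hφ0.trans (hΦ 0 ⟨le_rfl, hτ.1⟩)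
  obtain ⟨B, hB⟩ : ∃ B, B = C + Φ + 1 := ⟨_, rfl⟩
  have hB1 : 1 ≤ B := by linarith
  -- Halving: an excess over `φ` of size `K e^{2Bt}` is in fact at most half as large.
  have step : ∀ K, 0 ≤ K → (∀ s ∈ Icc 0 τ, ∀ y, |ux s y| ≤ φ s + K * Real.exp (2 * B * s)) →
      ∀ s ∈ Icc 0 τ, ∀ y, |ux s y| ≤ φ s + K / 2 * Real.exp (2 * B * s) := by
    intro K hK hb s hs y
    obtain ⟨X, hXs, hX⟩ := h.exists_char (hsub s hs) y
    have hXc : ContinuousOn X (Icc 0 s) := fun r hr => (hX r hr).continuousWithinAt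
    have hHc := h.continuousOn_ux_char (hsub s hs) hXc
    have hsτ : ∀ r ∈ Icc 0 s, r ∈ Icc 0 τ := fun r hr => ⟨hr.1, hr.2.trans hs.2⟩
    have hH : ∀ r ∈ Ioo 0 s, HasDerivAt (fun r => ux r (X r))
        (-(ux r (X r) ^ 2 / 2) - rbP ℓ ux r (X r)) r := fun r hr =>
      h.hasDerivAt_ux_char hℓ ⟨hr.1, hr.2.trans_le (hs.2.trans hτ.2.le)⟩
        ((hX r ⟨hr.1.le, hr.2.le⟩).hasDerivAt (Icc_mem_nhds hr.1 hr.2))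
    -- `H = u_x(·, X)` is nonincreasing, as `H' = -½ H² - P` with `P ≥ 0`.
    have hup : ux s y ≤ φ s := by
      have hanti : AntitoneOn (fun r => ux r (X r)) (Icc 0 s) := by
        refine antitoneOn_of_deriv_nonpos (convex_Icc 0 s) hHc ?_ ?_
        · rw [interior_Icc]
          exact fun r hr => (hH r hr).differentiableAt.differentiableWithinAt
        · rw [interior_Icc]
          intro r hr
          rw [(hH r hr).deriv]
          have := rbP_nonneg (ux := ux) hℓ r (X r)
          have := sq_nonneg (ux r (X r))
          linarith
      have h1 := hanti (left_mem_Icc.2 hs.1) (right_mem_Icc.2 hs.1) hs.1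
      simp only [hXs] at h1
      exact h1.trans ((le_abs_self _).trans ((h0 _).trans (hmono s hs)))
    have hE : ∀ r, HasDerivAt (fun r => K / 2 * Real.exp (2 * B * r))
        (K / 2 * (Real.exp (2 * B * r) * (2 * B))) r := fun r => by
      simpa using (((hasDerivAt_id r).const_mul (2 * B)).exp).const_mul (K / 2)
    have hlow : -ux s y ≤ φ s + K / 2 * Real.exp (2 * B * s) := by
      have hd : ∀ r ∈ Ioo 0 s, HasDerivAt
          (fun r => -ux r (X r) - φ r - K / 2 * Real.exp (2 * B * r))
          (-(-(ux r (X r) ^ 2 / 2) - rbP ℓ ux r (X r)) - φ r ^ 2 -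
            K / 2 * (Real.exp (2 * B * r) * (2 * B))) r := fun r hr =>
        ((hH r hr).neg.sub (hφ r (hsτ r ⟨hr.1.le, hr.2.le⟩))).sub (hE r)
      have hanti : AntitoneOn (fun r => -ux r (X r) - φ r - K / 2 * Real.exp (2 * B * r))
          (Icc 0 s) := by
        refine antitoneOn_of_deriv_nonpos (convex_Icc 0 s) ((hHc.neg.sub fun r hr =>
          (hφ r (hsτ r hr)).continuousAt.continuousWithinAt).sub fun r hr =>
          (hE r).continuousAt.continuousWithinAt) ?_ ?_
        · rw [interior_Icc]
          exact fun r hr => (hd r hr).differentiableAt.differentiableWithinAt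
        · rw [interior_Icc]
          intro r hr
          have hr' := hsτ r ⟨hr.1.le, hr.2.le⟩
          rw [(hd r hr).deriv]
          obtain ⟨E, hEdef⟩ : ∃ E, E = K * Real.exp (2 * B * r) := ⟨_, rfl⟩
          have hE0 : 0 ≤ E := hEdef ▸ by positivity
          have hbd : ∀ y, |ux r y| ≤ min C (φ r + E) := fun y =>
            le_min (hC r hr' y).2.1 (hEdef ▸ hb r hr' y)
          -- Capping at `C` makes `G + φ ≤ B`, so that `G² - φ²` is linear in the excess `E`.
          obtain ⟨G, hG⟩ : ∃ G, G = min C (φ r + E) := ⟨_, rfl⟩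
          rw [← hG] at hbd
          have hP := h.rbP_le hℓ (hsub r hr') hbd (X r)
          have hux2 := sq_le_sq' (abs_le.1 (hbd (X r))).1 (abs_le.1 (hbd (X r))).2
          have hG0 : 0 ≤ G := (abs_nonneg _).trans (hbd 0)
          have hGC : G ≤ C := hG ▸ min_le_left _ _
          have hGE : G - φ r ≤ E := by
            have : G ≤ φ r + E := hG ▸ min_le_right _ _
            linarith
          have hφr : 0 ≤ φ r := hφ0.trans (hmono r hr')
          have key : G ^ 2 - φ r ^ 2 ≤ B * E := by
            have h1 : (G + φ r) * (G - φ r) ≤ (G + φ r) * E :=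
              mul_le_mul_of_nonneg_left hGE (by positivity)
            have h2 : (G + φ r) * E ≤ B * E :=
              mul_le_mul_of_nonneg_right (by have := hΦ r hr'; linarith) hE0
            nlinarith
          have : K / 2 * (Real.exp (2 * B * r) * (2 * B)) = B * E := by rw [hEdef]; ring
          rw [this]
          linarith
      have h1 := hanti (left_mem_Icc.2 hs.1) (right_mem_Icc.2 hs.1) hs.1
      simp only [hXs] at h1
      have h2 := (neg_le_abs _).trans (h0 (X 0))
      have h3 : 0 ≤ K / 2 * Real.exp (2 * B * 0) := by positivity
      linarith
    have : 0 ≤ K / 2 * Real.exp (2 * B * s) := by positivity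
    exact abs_le'.2 ⟨by linarith, hlow⟩
  have all : ∀ n : ℕ, ∀ s ∈ Icc 0 τ, ∀ y,
      |ux s y| ≤ φ s + C / 2 ^ n * Real.exp (2 * B * s) := by
    intro n
    induction n with
    | zero =>
      intro s hs y
      have h1 := (hC s hs y).2.1
      have h2 : 0 ≤ φ s := hφ0.trans (hmono s hs)
      have h3 : 1 ≤ Real.exp (2 * B * s) := Real.one_le_exp (by have := hs.1; positivity)
      have h4 := mul_le_mul_of_nonneg_left h3 hC0
      simp only [pow_zero, div_one]
      linarith
    | succ n ih =>
      have := step (C / 2 ^ n) (by positivity) ih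
      simpa only [pow_succ, div_div] using this
  have hlim : Tendsto (fun n : ℕ => φ t + C / 2 ^ n * Real.exp (2 * B * t)) atTop
      (nhds (φ t + 0 * Real.exp (2 * B * t))) :=
    ((tendsto_const_nhds.div_atTop (tendsto_pow_atTop_atTop_of_one_lt one_lt_two)).mul_const
      _).const_add _
  have := ge_of_tendsto' hlim fun n => all n t ht x
  simpa using this

end IsClassicalSolRB

/-! ### The lower bound -/

/-- **Uniform lower bound on the blow-up time** (Theorem 3.6 and Remark 3.7):
if the solution blows up at time `T` (in the sense that `inf_x u_x(t,x) → −∞` as `t ↑ T`),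
`inf u_0' < 0 < sup u_0'` and `A = sup_x |u_0'(x)|` is finite, then `T ≥ 1/A`;
in particular the lower bound does not depend on `ℓ`. -/
theorem blowup_time_lower_bound (ℓ T : ℝ) (hℓ : 0 < ℓ) (hT : 0 < T)
    (u ut ux uxx Px : ℝ → ℝ → ℝ)
    (hsol : IsClassicalSolRB ℓ T u ut ux uxx Px)
    (hblow : Filter.Tendsto (fun t => sInf (Set.range fun x => ux t x))
      (nhdsWithin T (Set.Iio T)) Filter.atBot)
    (hneg : ∃ x : ℝ, ux 0 x < 0) (hpos : ∃ x : ℝ, 0 < ux 0 x)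
    (A : ℝ) (hA : IsLUB (Set.range fun x => |ux 0 x|) A) :
    1 / A ≤ T := by
  obtain ⟨x₀, hx₀⟩ := hpos
  have hA0 : 0 < A := (abs_pos.2 hx₀.ne').trans_le (hA.1 ⟨x₀, rfl⟩)
  by_contra! hlt
  have hAT : A * T < 1 := by rwa [lt_div_iff₀ hA0, mul_comm] at hlt
  -- the solution of `φ' = φ²`, `φ 0 = A`, which is finite up to time `1 / A > T`
  let φ : ℝ → ℝ := fun t => A / (1 - A * t)
  have hden : ∀ t, t ≤ T → 0 < 1 - A * t := fun t ht => by
    have := mul_le_mul_of_nonneg_left ht hA0.le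
    linarith
  have hφm : ∀ s t, s ≤ t → t ≤ T → φ s ≤ φ t := fun s t hst ht => by
    have := hden t ht
    have := mul_le_mul_of_nonneg_left hst hA0.le
    exact div_le_div_of_nonneg_left hA0.le (hden t ht) (by linarith)
  have hφ0 : φ 0 = A := by simp [φ]
  have hbound : ∀ t ∈ Ico 0 T, ∀ x, |ux t x| ≤ φ T := fun t ht x => by
    refine (hsol.abs_ux_le (φ := φ) (Φ := φ T) hℓ ht (fun s hs => ?_) (fun y => ?_)
      (fun s hs => hφm 0 s hs.1 (hs.2.trans ht.2.le))
      (fun s hs => hφm s T (hs.2.trans ht.2.le) le_rfl) ⟨ht.1, le_rfl⟩ x).trans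
      (hφm t T ht.2.le le_rfl)
    · have hs' := (hden s (hs.2.trans ht.2.le)).ne'
      refine ((hasDerivAt_const s A).div (((hasDerivAt_id s).const_mul A).const_sub 1)
        hs').congr_deriv ?_
      simp only [φ, id]
      field_simp
      ring
    · rw [hφ0]
      exact hA.1 ⟨y, rfl⟩
  have h1 : ∀ᶠ t in nhdsWithin T (Iio T), t ∈ Ico 0 T :=
    mem_of_superset (Ioo_mem_nhdsLT hT) fun t ht => ⟨ht.1.le, ht.2⟩
  obtain ⟨t, ht, hlow⟩ := (h1.and (hblow.eventually (eventually_lt_atBot (-φ T)))).exists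
  refine absurd hlow (not_lt.2 (le_csInf (range_nonempty _) ?_))
  rintro _ ⟨x, rfl⟩
  exact (abs_le.1 (hbound t ht x)).1
end

section
/- Let ℓ > 0 and let u be a classical solution of the rB equation on [0,T) (jointly C³, with u and its spatial derivatives up to order three bounded on [0,t] × ℝ for every t < T, u_x(t,·) square-integrable). Then u satisfies the pointwise energy conservation law ∂_t( ½ u² + ½ ℓ² u_x² ) + ∂_x( ⅓ u³ + ℓ² u P + ½ ℓ² u u_x² ) = 0 on [0,T) × ℝ. -/
/-!
The time derivative of the energy density involves `∂_t u_x`, which the equation gives once it is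
differentiated in `x`. Two facts make this legitimate.

* Mixed partials commute (`mixed_partials`), also on the boundary line `t = 0`, where `u` is
  smooth only from one side: the half-open strip has unique differentials and lies in the closure
  of its interior, so the second derivative within the strip is symmetric.
* The kernel `𝔊_ℓ` is the Green function of `1 - ℓ² ∂_x²`: for continuous integrable `f` the
  convolution `K = 𝔊_ℓ ∗ f` is twice differentiable with `ℓ² K'' = K - f`
  (`exists_hasDerivAt_greenConv`). The proof splits the integral at `x` and uses the
  fundamental theorem of calculus on each half.

Hence `∂_t u_x = - u_x² / 2 - u u_xx - P`, and the conservation law is the combination of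
`u` times the equation and `ℓ² u_x` times this derivative equation.
-/


open MeasureTheory Set Filter

/-- A `C³` classical solution of the regularised Burgers equation in convolution form,
`u_t + u u_x + ℓ² P_x = 0` on `[0,T)`: `u` is jointly `C³`, `u` and its spatial derivatives
up to order three are bounded on `[0,t] × ℝ` for every `t < T`, `u_x(t,·)` is
square-integrable, and the equation holds pointwise.  Here `ut, ux, uxx, uxxx` denote the
partial derivatives of `u`, `utx = ∂_t u_x`, `utxx = ∂_t u_{xx}`, and `Px` the spatial
derivative of `P = rbP ℓ ux`. -/
structure IsClassicalSolRB3 (ℓ T : ℝ) (u ut ux uxx uxxx utx utxx Px : ℝ → ℝ → ℝ) : Prop where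
  smooth : ContDiffOn ℝ 3 (fun p : ℝ × ℝ => u p.1 p.2) (Set.Ico 0 T ×ˢ Set.univ)
  hut : ∀ t ∈ Set.Ico (0 : ℝ) T, ∀ x : ℝ, HasDerivAt (fun s => u s x) (ut t x) t
  hux : ∀ t ∈ Set.Ico (0 : ℝ) T, ∀ x : ℝ, HasDerivAt (fun y => u t y) (ux t x) x
  huxx : ∀ t ∈ Set.Ico (0 : ℝ) T, ∀ x : ℝ, HasDerivAt (fun y => ux t y) (uxx t x) x
  huxxx : ∀ t ∈ Set.Ico (0 : ℝ) T, ∀ x : ℝ, HasDerivAt (fun y => uxx t y) (uxxx t x) x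
  hutx : ∀ t ∈ Set.Ico (0 : ℝ) T, ∀ x : ℝ, HasDerivAt (fun s => ux s x) (utx t x) t
  hutxx : ∀ t ∈ Set.Ico (0 : ℝ) T, ∀ x : ℝ, HasDerivAt (fun s => uxx s x) (utxx t x) t
  bounded : ∀ t ∈ Set.Ico (0 : ℝ) T, ∃ C : ℝ, ∀ s ∈ Set.Icc (0 : ℝ) t, ∀ x : ℝ,
      |u s x| ≤ C ∧ |ux s x| ≤ C ∧ |uxx s x| ≤ C ∧ |uxxx s x| ≤ C
  sqInt : ∀ t ∈ Set.Ico (0 : ℝ) T, MeasureTheory.Integrable (fun x : ℝ => ux t x ^ 2)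
  hPx : ∀ t ∈ Set.Ico (0 : ℝ) T, ∀ x : ℝ, HasDerivAt (fun y => rbP ℓ ux t y) (Px t x) x
  eqn : ∀ t ∈ Set.Ico (0 : ℝ) T, ∀ x : ℝ, ut t x + u t x * ux t x + ℓ ^ 2 * Px t x = 0

/-- A left tail integral has the integrand as its derivative. -/
lemma hasDerivAt_integral_Iic {g : ℝ → ℝ} (hg : Continuous g)
    (hi : ∀ x, IntegrableOn g (Iic x)) (x : ℝ) :
    HasDerivAt (fun z => ∫ y in Iic z, g y) (g x) x := by
  have h : (fun z => ∫ y in Iic z, g y) = fun z => (∫ y in Iic 0, g y) + ∫ y in (0 : ℝ)..z, g y := by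
    funext z
    rw [← intervalIntegral.integral_Iic_sub_Iic (hi 0) (hi z)]
    ring
  rw [h]
  exact (hg.integral_hasStrictDerivAt 0 x).hasDerivAt.const_add _

/-- A right tail integral has minus the integrand as its derivative. -/
lemma hasDerivAt_integral_Ioi {g : ℝ → ℝ} (hg : Continuous g)
    (hi : ∀ x, IntegrableOn g (Ioi x)) (x : ℝ) :
    HasDerivAt (fun z => ∫ y in Ioi z, g y) (-g x) x := by
  have h : (fun z => ∫ y in Ioi z, g y) = fun z => (∫ y in Ioi 0, g y) - ∫ y in (0 : ℝ)..z, g y := by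
    funext z
    rw [← intervalIntegral.integral_Ioi_sub_Ioi' (hi 0) (hi z)]
    ring
  rw [h]
  exact (hg.integral_hasStrictDerivAt 0 x).hasDerivAt.const_sub _

lemma integrableOn_exp_div_mul_Iic {ℓ : ℝ} (hℓ : 0 < ℓ) {f : ℝ → ℝ} (hi : Integrable f) (x : ℝ) :
    IntegrableOn (fun y => Real.exp (y / ℓ) * f y) (Iic x) := by
  refine Integrable.bdd_mul (c := Real.exp (x / ℓ)) hi.integrableOn
    (by fun_prop) ?_
  filter_upwards [ae_restrict_mem measurableSet_Iic] with y hy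
  rw [Real.norm_eq_abs, Real.abs_exp, Real.exp_le_exp]
  have : y ≤ x := hy
  gcongr

lemma integrableOn_exp_div_mul_Ioi {ℓ : ℝ} (hℓ : 0 < ℓ) {f : ℝ → ℝ} (hi : Integrable f) (x : ℝ) :
    IntegrableOn (fun y => Real.exp (-(y / ℓ)) * f y) (Ioi x) := by
  refine Integrable.bdd_mul (c := Real.exp (-(x / ℓ))) hi.integrableOn
    (by fun_prop) ?_
  filter_upwards [ae_restrict_mem measurableSet_Ioi] with y hy
  rw [Real.norm_eq_abs, Real.abs_exp, Real.exp_le_exp]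
  have : x ≤ y := le_of_lt hy
  gcongr

/-- Splitting the integral at `x` separates the variables in the kernel. -/
lemma greenConv_eq {ℓ : ℝ} (hℓ : 0 < ℓ) {f : ℝ → ℝ} (hi : Integrable f) (x : ℝ) :
    ∫ y : ℝ, (2 * ℓ)⁻¹ * Real.exp (-|x - y| / ℓ) * f y
      = (2 * ℓ)⁻¹ * (Real.exp (-(x / ℓ)) * (∫ y in Iic x, Real.exp (y / ℓ) * f y)
        + Real.exp (x / ℓ) * ∫ y in Ioi x, Real.exp (-(y / ℓ)) * f y) := by
  have e1 : EqOn (fun y => (2 * ℓ)⁻¹ * Real.exp (-|x - y| / ℓ) * f y)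
      (fun y => ((2 * ℓ)⁻¹ * Real.exp (-(x / ℓ))) * (Real.exp (y / ℓ) * f y)) (Iic x) := by
    intro y hy
    have hy' : y ≤ x := hy
    have : -|x - y| / ℓ = -(x / ℓ) + y / ℓ := by
      rw [abs_of_nonneg (by linarith)]; ring
    simp only [this, Real.exp_add]
    ring
  have e2 : EqOn (fun y => (2 * ℓ)⁻¹ * Real.exp (-|x - y| / ℓ) * f y)
      (fun y => ((2 * ℓ)⁻¹ * Real.exp (x / ℓ)) * (Real.exp (-(y / ℓ)) * f y)) (Ioi x) := by
    intro y hy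
    have hy' : x < y := hy
    have : -|x - y| / ℓ = x / ℓ + -(y / ℓ) := by
      rw [abs_of_neg (by linarith)]; ring
    simp only [this, Real.exp_add]
    ring
  rw [← intervalIntegral.integral_Iic_add_Ioi (b := x)
    (IntegrableOn.congr_fun ((integrableOn_exp_div_mul_Iic hℓ hi x).const_mul _) e1.symm
      measurableSet_Iic)
    (IntegrableOn.congr_fun ((integrableOn_exp_div_mul_Ioi hℓ hi x).const_mul _) e2.symm
      measurableSet_Ioi),
    setIntegral_congr_fun measurableSet_Iic e1, setIntegral_congr_fun measurableSet_Ioi e2,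
    integral_const_mul, integral_const_mul]
  ring

/-- `(2ℓ)⁻¹ exp(-|x|/ℓ)` is the Green function of `1 - ℓ² ∂_x²`: the convolution `K` of it with `f`
has a derivative `Q` that is itself differentiable with `ℓ² Q' = K - f`. -/
lemma exists_hasDerivAt_greenConv {ℓ : ℝ} (hℓ : 0 < ℓ) {f : ℝ → ℝ} (hf : Continuous f)
    (hi : Integrable f) :
    ∃ Q : ℝ → ℝ, ∀ x,
      HasDerivAt (fun z => ∫ y : ℝ, (2 * ℓ)⁻¹ * Real.exp (-|z - y| / ℓ) * f y) (Q x) x ∧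
      HasDerivAt Q
        (((∫ y : ℝ, (2 * ℓ)⁻¹ * Real.exp (-|x - y| / ℓ) * f y) - f x) / ℓ ^ 2) x := by
  simp only [greenConv_eq hℓ hi]
  set a : ℝ → ℝ := fun z => ∫ y in Iic z, Real.exp (y / ℓ) * f y
  set b : ℝ → ℝ := fun z => ∫ y in Ioi z, Real.exp (-(y / ℓ)) * f y
  have ha : ∀ x, HasDerivAt a (Real.exp (x / ℓ) * f x) x :=
    hasDerivAt_integral_Iic (by fun_prop) (integrableOn_exp_div_mul_Iic hℓ hi)
  have hb : ∀ x, HasDerivAt b (-(Real.exp (-(x / ℓ)) * f x)) x :=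
    hasDerivAt_integral_Ioi (by fun_prop) (integrableOn_exp_div_mul_Ioi hℓ hi)
  have hp : ∀ x, HasDerivAt (fun z => Real.exp (z / ℓ)) (Real.exp (x / ℓ) * (1 / ℓ)) x :=
    fun x => ((hasDerivAt_id x).div_const ℓ).exp
  have hm : ∀ x, HasDerivAt (fun z => Real.exp (-(z / ℓ))) (Real.exp (-(x / ℓ)) * -(1 / ℓ)) x :=
    fun x => ((hasDerivAt_id x).div_const ℓ).fun_neg.exp
  refine ⟨fun x => (2 * ℓ)⁻¹ * ((1 / ℓ) *
    (Real.exp (x / ℓ) * b x - Real.exp (-(x / ℓ)) * a x)), fun x => ⟨?_, ?_⟩⟩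
  · refine ((((hm x).fun_mul (ha x)).fun_add ((hp x).fun_mul (hb x))).const_mul _).congr_deriv ?_
    ring
  · refine (((((hp x).fun_mul (hb x)).fun_sub ((hm x).fun_mul (ha x))).const_mul _).const_mul
      _).congr_deriv ?_
    have h : Real.exp (x / ℓ) * Real.exp (-(x / ℓ)) = 1 := by rw [← Real.exp_add]; simp
    field_simp
    linear_combination (-2 * ℓ * f x) * h

lemma hasDerivWithinAt_time_slice {E : Type*} [NormedAddCommGroup E] [NormedSpace ℝ E]
    {I : Set ℝ} {G : ℝ × ℝ → E} {G' : ℝ × ℝ →L[ℝ] E} {t x : ℝ}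
    (h : HasFDerivWithinAt G G' (I ×ˢ univ) (t, x)) :
    HasDerivWithinAt (fun s => G (s, x)) (G' (1, 0)) I t :=
  h.comp_hasDerivWithinAt (f := fun s : ℝ => (s, x)) t
    ((hasDerivWithinAt_id t I).prodMk (hasDerivWithinAt_const t I x)) fun _ hs => ⟨hs, trivial⟩

lemma hasDerivAt_space_slice {E : Type*} [NormedAddCommGroup E] [NormedSpace ℝ E]
    {I : Set ℝ} {G : ℝ × ℝ → E} {G' : ℝ × ℝ →L[ℝ] E} {t x : ℝ} (ht : t ∈ I)
    (h : HasFDerivWithinAt G G' (I ×ˢ univ) (t, x)) :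
    HasDerivAt (fun y => G (t, y)) (G' (0, 1)) x :=
  hasDerivWithinAt_univ.1 <| h.comp_hasDerivWithinAt (f := fun y : ℝ => (t, y)) x
    ((hasDerivWithinAt_const x univ t).prodMk (hasDerivWithinAt_id x univ)) fun _ _ => ⟨ht, trivial⟩

/-- Commutation of mixed partials on the half-open strip `[0,T) × ℝ`, boundary line included. -/
lemma mixed_partials {T : ℝ} {u ut ux utx : ℝ → ℝ → ℝ}
    (smooth : ContDiffOn ℝ 3 (fun p : ℝ × ℝ => u p.1 p.2) (Set.Ico 0 T ×ˢ Set.univ))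
    (hut : ∀ t ∈ Set.Ico (0 : ℝ) T, ∀ x : ℝ, HasDerivAt (fun s => u s x) (ut t x) t)
    (hux : ∀ t ∈ Set.Ico (0 : ℝ) T, ∀ x : ℝ, HasDerivAt (fun y => u t y) (ux t x) x)
    (hutx : ∀ t ∈ Set.Ico (0 : ℝ) T, ∀ x : ℝ, HasDerivAt (fun s => ux s x) (utx t x) t)
    {t : ℝ} (ht : t ∈ Set.Ico (0 : ℝ) T) (x : ℝ) :
    HasDerivAt (fun y => ut t y) (utx t x) x := by
  set S : Set (ℝ × ℝ) := Set.Ico 0 T ×ˢ Set.univ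
  set F : ℝ × ℝ → ℝ := fun p => u p.1 p.2
  have hS : UniqueDiffOn ℝ S := (uniqueDiffOn_Ico 0 T).prod uniqueDiffOn_univ
  have mem : ∀ s ∈ Set.Ico (0 : ℝ) T, ∀ y, ((s, y) : ℝ × ℝ) ∈ S := fun s hs y => ⟨hs, trivial⟩
  have hF : ∀ s ∈ Set.Ico (0 : ℝ) T, ∀ y, HasFDerivWithinAt F (fderivWithin ℝ F S (s, y)) S (s, y) :=
    fun s hs y => ((smooth.differentiableOn (by norm_num)) _ (mem s hs y)).hasFDerivWithinAt
  have eut : ∀ s ∈ Set.Ico (0 : ℝ) T, ∀ y, ut s y = fderivWithin ℝ F S (s, y) (1, 0) :=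
    fun s hs y => (uniqueDiffOn_Ico 0 T s hs).eq_deriv _ (hut s hs y).hasDerivWithinAt
      (hasDerivWithinAt_time_slice (hF s hs y))
  have eux : ∀ s ∈ Set.Ico (0 : ℝ) T, ∀ y, ux s y = fderivWithin ℝ F S (s, y) (0, 1) :=
    fun s hs y => (hux s hs y).unique (hasDerivAt_space_slice hs (hF s hs y))
  have hG : HasFDerivWithinAt (fderivWithin ℝ F S)
      (fderivWithin ℝ (fderivWithin ℝ F S) S (t, x)) S (t, x) :=
    (((smooth.fderivWithin hS (m := 2) (by norm_num)).differentiableOn (by norm_num)) _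
      (mem t ht x)).hasFDerivWithinAt
  have symm : IsSymmSndFDerivWithinAt ℝ F S (t, x) := by
    refine (smooth _ (mem t ht x)).isSymmSndFDerivWithinAt (by simp; norm_num) hS ?_ (mem t ht x)
    have h0T : (0 : ℝ) < T := ht.1.trans_lt ht.2
    rw [interior_prod_eq, interior_Ico, interior_univ, closure_prod_eq, closure_Ioo h0T.ne,
      closure_univ]
    exact ⟨Ico_subset_Icc_self ht, trivial⟩
  have d1 : HasDerivWithinAt (fun s => fderivWithin ℝ F S (s, x) (0, 1))
      (fderivWithin ℝ (fderivWithin ℝ F S) S (t, x) (1, 0) (0, 1)) (Set.Ico 0 T) t :=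
    ((ContinuousLinearMap.apply ℝ ℝ ((0 : ℝ), (1 : ℝ))).hasFDerivAt.comp_hasDerivWithinAt t
      (hasDerivWithinAt_time_slice hG))
  have d2 : HasDerivAt (fun y => fderivWithin ℝ F S (t, y) (1, 0))
      (fderivWithin ℝ (fderivWithin ℝ F S) S (t, x) (0, 1) (1, 0)) x :=
    ((ContinuousLinearMap.apply ℝ ℝ ((1 : ℝ), (0 : ℝ))).hasFDerivAt.comp_hasDerivAt x
      (hasDerivAt_space_slice ht hG))
  have e : utx t x = fderivWithin ℝ (fderivWithin ℝ F S) S (t, x) (1, 0) (0, 1) :=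
    (uniqueDiffOn_Ico 0 T t ht).eq_deriv _ (hutx t ht x).hasDerivWithinAt
      (d1.congr (fun s hs => eux s hs x) (eux t ht x))
  rw [e, symm (1, 0) (0, 1)]
  exact d2.congr_of_eventuallyEq (Eventually.of_forall fun y => eut t ht y)

/-- **Pointwise energy conservation** (equation (3.6)): a `C³` classical solution of the
regularised Burgers equation satisfies
`∂_t(½u² + ½ℓ²u_x²) + ∂_x(⅓u³ + ℓ²uP + ½ℓ²uu_x²) = 0` pointwise on `[0,T) × ℝ`. -/
theorem rb_energy_conservation (ℓ T : ℝ) (hℓ : 0 < ℓ)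
    (u ut ux uxx uxxx utx utxx Px : ℝ → ℝ → ℝ)
    (hsol : IsClassicalSolRB3 ℓ T u ut ux uxx uxxx utx utxx Px) :
    ∀ t ∈ Set.Ico (0 : ℝ) T, ∀ x : ℝ, ∃ A B : ℝ,
      HasDerivAt (fun s => u s x ^ 2 / 2 + ℓ ^ 2 * ux s x ^ 2 / 2) A t ∧
      HasDerivAt (fun y => u t y ^ 3 / 3 + ℓ ^ 2 * u t y * rbP ℓ ux t y
        + ℓ ^ 2 * u t y * ux t y ^ 2 / 2) B x ∧
      A + B = 0 := by
  intro t ht x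
  have cux : Continuous (ux t) :=
    continuous_iff_continuousAt.2 fun y => (hsol.huxx t ht y).continuousAt
  obtain ⟨Q, hQ⟩ := exists_hasDerivAt_greenConv hℓ (f := fun y => ux t y ^ 2 / 2) (by fun_prop)
    ((hsol.sqInt t ht).div_const 2)
  have hPQ : Px t = Q := funext fun y => (hsol.hPx t ht y).unique (hQ y).1
  have hPxx : HasDerivAt (Px t) ((rbP ℓ ux t x - ux t x ^ 2 / 2) / ℓ ^ 2) x :=
    hPQ ▸ (hQ x).2
  have hu := hsol.hux t ht x
  have hux := hsol.huxx t ht x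
  have hut_eq : (fun y => ut t y) = fun y => -(u t y * ux t y) - ℓ ^ 2 * Px t y :=
    funext fun y => by linear_combination hsol.eqn t ht y
  have hmix := mixed_partials hsol.smooth hsol.hut hsol.hux hsol.hutx ht x
  rw [hut_eq] at hmix
  have hutx := hmix.unique ((hu.fun_mul hux).fun_neg.fun_sub (hPxx.const_mul (ℓ ^ 2)))
  rw [mul_div_cancel₀ _ (by positivity : ℓ ^ 2 ≠ 0)] at hutx
  refine ⟨_, _, (((hsol.hut t ht x).fun_pow 2).div_const 2).fun_add
    ((((hsol.hutx t ht x).fun_pow 2).const_mul (ℓ ^ 2)).div_const 2),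
    (((hu.fun_pow 3).div_const 3).fun_add ((hu.const_mul (ℓ ^ 2)).fun_mul
      (hsol.hPx t ht x))).fun_add
      (((hu.const_mul (ℓ ^ 2)).fun_mul (hux.fun_pow 2)).div_const 2), ?_⟩
  have h := hsol.eqn t ht x
  push_cast
  linear_combination u t x * h + ℓ ^ 2 * ux t x * hutx
end
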